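/- arXiv:1704.06688 — 5 statements merged into one kernel-verified Lean document; each statement's English description precedes it below -/
import Mathlib

section
/- Let H be a real inner product space with inner product ⟨·,·⟩, and let E be a subspace of H. Let a, ã ∈ H be orthogonal to E (i.e., ⟨a,w⟩ = 0 and ⟨ã,w⟩ = 0 for all w ∈ E), and let b, b̃, t ∈ E. Then ⟨t, b⟩ − ⟨t + (1/2)(ã − b̃), b − a⟩ = (1/2)⟨a + b, ã + b̃⟩. -/
open scoped RealInnerProductSpace

/-- Abstract Hilbert-space form of the basic identity of goal-oriented error
estimation: if `a, aT` are orthogonal to the subspace `E` and `b, bT, t ∈ E`, then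
`⟪t, b⟫ − ⟪t + (1/2)(aT − bT), b − a⟫ = (1/2)⟪a + b, aT + bT⟫`. -/
theorem basic_identity {H : Type*} [NormedAddCommGroup H] [InnerProductSpace ℝ H]
    (E : Submodule ℝ H) (a aT b bT t : H)
    (ha : ∀ w ∈ E, ⟪a, w⟫ = 0) (haT : ∀ w ∈ E, ⟪aT, w⟫ = 0)
    (hb : b ∈ E) (hbT : bT ∈ E) (ht : t ∈ E) :
    ⟪t, b⟫ - ⟪t + (1/2 : ℝ) • (aT - bT), b - a⟫
      = (1/2 : ℝ) * ⟪a + b, aT + bT⟫ := by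
  have h1 := ha t ht
  have h2 := ha bT hbT
  have h3 := haT b hb
  rw [real_inner_comm] at h1
  have h4 : ⟪bT, a⟫ = 0 := by rw [real_inner_comm]; exact h2
  have h5 : ⟪b, aT⟫ = 0 := by rw [real_inner_comm]; exact h3
  have h6 := real_inner_comm a aT
  have h7 := real_inner_comm b bT
  simp only [inner_add_left, inner_add_right, inner_sub_left, inner_sub_right,
    real_inner_smul_left]
  linarith
end

section
/- Let H be a real inner product space with inner product ⟨·,·⟩ and induced norm ‖·‖, and let E be a subspace of H. Let a, ã ∈ H be orthogonal to E (i.e., ⟨a,w⟩ = 0 and ⟨ã,w⟩ = 0 for all w ∈ E), and let b, b̃, t ∈ E. Then |⟨t, b⟩ − ⟨t + (1/2)(ã − b̃), b − a⟩| ≤ (1/2) ‖b − a‖ · ‖ã + b̃‖. -/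
open scoped RealInnerProductSpace

/-- Abstract Hilbert-space form of the classical goal-oriented bounding
`|I_ex − I_h − I_hh| ≤ (1/2) e_cre ẽ_cre`. -/
theorem classical_bounding {H : Type*} [NormedAddCommGroup H] [InnerProductSpace ℝ H]
    (E : Submodule ℝ H) (a aT b bT t : H)
    (ha : ∀ w ∈ E, ⟪a, w⟫ = 0) (haT : ∀ w ∈ E, ⟪aT, w⟫ = 0)
    (hb : b ∈ E) (hbT : bT ∈ E) (ht : t ∈ E) :
    |⟪t, b⟫ - ⟪t + (1/2 : ℝ) • (aT - bT), b - a⟫|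
      ≤ (1/2 : ℝ) * (‖b - a‖ * ‖aT + bT‖) := by
  have h1 := ha b hb
  have h2 := ha bT hbT
  have h3 := ha t ht
  have h4 := haT b hb
  have hn : ‖a + b‖ = ‖b - a‖ := by
    have h : ‖a + b‖ ^ 2 = ‖b - a‖ ^ 2 := by
      rw [norm_add_sq_real, norm_sub_sq_real, real_inner_comm a b, h1]
      ring
    exact (sq_eq_sq₀ (norm_nonneg _) (norm_nonneg _)).mp h
  have key : ⟪t, b⟫ - ⟪t + (1/2 : ℝ) • (aT - bT), b - a⟫
      = (1/2 : ℝ) * ⟪a + b, aT + bT⟫ := by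
    simp only [inner_add_left, inner_add_right, inner_sub_left, inner_sub_right,
      real_inner_smul_left]
    rw [real_inner_comm a t, real_inner_comm a bT, real_inner_comm aT b,
      real_inner_comm a aT, real_inner_comm b bT] at *
    linarith
  rw [key, abs_mul, abs_of_pos (by norm_num : (0 : ℝ) < 1/2), ← hn]
  exact mul_le_mul_of_nonneg_left (abs_real_inner_le_norm _ _) (by norm_num)
end

section
/- Let h > 0 and 0 < λ ≤ λ̄ be real numbers. Let F : [λ, λ̄] → ℝ be continuously differentiable and α : [λ, λ̄] → ℝ be continuous, and assume F(s) − h·s·F'(s) ≤ α(s) for all s ∈ [λ, λ̄]. Then F(λ) ≤ (λ/λ̄)^{1/h} F(λ̄) + ∫_λ^{λ̄} (s/λ)^{−1/h} · (α(s)/(h·s)) ds. -/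
open intervalIntegral

/-- Real-analytic core of Proposition 1 (first improved bounding technique):
if `F(s) − h·s·F'(s) ≤ α(s)` on `[λ, λ̄]` with `F` continuously differentiable and
`α` continuous, then `F(λ) ≤ (λ/λ̄)^(1/h) F(λ̄) + ∫_λ^λ̄ (s/λ)^(−1/h) α(s)/(h s) ds`. -/
theorem first_improved_key_inequality
    (h lam lamBar : ℝ) (hh : 0 < h) (hlam : 0 < lam) (hle : lam ≤ lamBar)
    (F F' α : ℝ → ℝ)
    (hF : ∀ s ∈ Set.Icc lam lamBar, HasDerivAt F (F' s) s)
    (hF' : ContinuousOn F' (Set.Icc lam lamBar))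
    (hα : ContinuousOn α (Set.Icc lam lamBar))
    (hineq : ∀ s ∈ Set.Icc lam lamBar, F s - h * s * F' s ≤ α s) :
    F lam ≤ (lam / lamBar) ^ (1 / h) * F lamBar
      + ∫ s in lam..lamBar, (s / lam) ^ (-(1 / h)) * (α s / (h * s)) := by
  have hpos : ∀ s ∈ Set.Icc lam lamBar, 0 < s := fun s hs => lt_of_lt_of_le hlam hs.1
  have hder : ∀ s ∈ Set.Icc lam lamBar,
      HasDerivAt (fun s => -((s / lam) ^ (-(1 / h)) * F s))
        ((s / lam) ^ (-(1 / h)) * ((F s - h * s * F' s) / (h * s))) s := by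
    intro s hs
    have hs0 := hpos s hs
    have hq : 0 < s / lam := div_pos hs0 hlam
    have h1 : HasDerivAt (fun s : ℝ => (s / lam) ^ (-(1 / h)))
        (1 / lam * (-(1 / h)) * (s / lam) ^ (-(1 / h) - 1)) s :=
      ((hasDerivAt_id s).div_const lam).rpow_const (Or.inl hq.ne')
    have h2 := (h1.mul (hF s hs)).neg
    refine h2.congr_deriv ?_
    rw [Real.rpow_sub_one hq.ne']
    generalize (s / lam) ^ (-(1 / h)) = w
    field_simp
    ring
  have hcont : ContinuousOn (fun s : ℝ => (s / lam) ^ (-(1 / h)) * (α s / (h * s)))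
      (Set.Icc lam lamBar) := by
    refine ContinuousOn.mul ?_ (hα.div (by fun_prop) ?_)
    · exact (continuousOn_id.div_const lam).rpow_const
        fun s hs => Or.inl (div_pos (hpos s hs) hlam).ne'
    · exact fun s hs => (mul_pos hh (hpos s hs)).ne'
  have key := sub_le_integral_of_hasDeriv_right_of_le hle
    (fun s hs => (hder s hs).continuousAt.continuousWithinAt)
    (fun s hs => (hder s (Set.Ioo_subset_Icc_self hs)).hasDerivWithinAt)
    hcont.integrableOn_Icc (fun s hs => by
      have hs' := Set.Ioo_subset_Icc_self hs
      have hs0 := hpos s hs'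
      have hi := hineq s hs'
      have hq : 0 < s / lam := div_pos hs0 hlam
      gcongr)
  have hb : (lamBar / lam) ^ (-(1 / h)) = (lam / lamBar) ^ (1 / h) := by
    have hq : 0 < lamBar / lam := div_pos (hlam.trans_le hle) hlam
    rw [Real.rpow_neg hq.le, ← Real.inv_rpow hq.le, inv_div]
  simp only [hb, div_self hlam.ne', Real.one_rpow] at key
  linarith
end

section
/- Let λ̄ > 0, k > 0, n ≥ 0 be real numbers and A, B ≥ 0. Then for every measurable function μ : (0, λ̄) → ℝ with μ(s) > 0 for all s ∈ (0, λ̄), one has (1/2) ∫_0^{λ̄} [ μ(s)·(k/s)·(s/λ̄)^k·A² + (1/μ(s))·(s/λ̄)^n·(1/λ̄)·B² ] ds ≥ (2·√k/(k + n + 1))·A·B (the left-hand side being possibly +∞). -/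
open MeasureTheory ENNReal

/-- Optimization step in the proof of Proposition 5: for every positive measurable
weight `μ` on `(0, λ̄)`,
`(1/2) ∫_0^λ̄ [ μ(s)(k/s)(s/λ̄)^k A² + (1/μ(s))(s/λ̄)^n (1/λ̄) B² ] ds
  ≥ (2√k/(k+n+1)) A B`, the left-hand side being possibly `+∞`. -/
theorem weight_optimization_lower_bound
    (lamBar k n : ℝ) (hlamBar : 0 < lamBar) (hk : 0 < k) (hn : 0 ≤ n)
    (A B : ℝ) (hA : 0 ≤ A) (hB : 0 ≤ B)
    (μ : ℝ → ℝ) (hμmeas : Measurable μ)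
    (hμpos : ∀ s ∈ Set.Ioo (0 : ℝ) lamBar, 0 < μ s) :
    ENNReal.ofReal ((2 * Real.sqrt k / (k + n + 1)) * A * B)
      ≤ (1 / 2 : ℝ≥0∞) * ∫⁻ s in Set.Ioo (0 : ℝ) lamBar,
          ENNReal.ofReal (μ s * (k / s) * (s / lamBar) ^ k * A ^ 2
            + (1 / μ s) * (s / lamBar) ^ n * (1 / lamBar) * B ^ 2) := by
  have hp : -1 < (k + n - 1) / 2 := by linarith
  set p : ℝ := (k + n - 1) / 2 with hpdef
  have hp1 : 0 < p + 1 := by linarith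
  have hC : 0 ≤ 2 * Real.sqrt k * A * B / lamBar ^ (p + 1) := by positivity
  set C : ℝ := 2 * Real.sqrt k * A * B / lamBar ^ (p + 1) with hCdef
  have hpt : ∀ s ∈ Set.Ioo (0 : ℝ) lamBar, C * s ^ p ≤
      μ s * (k / s) * (s / lamBar) ^ k * A ^ 2
            + (1 / μ s) * (s / lamBar) ^ n * (1 / lamBar) * B ^ 2 := by
    intro s hs
    have hm := hμpos s hs
    have hs0 : 0 < s := hs.1
    have ht : 0 < s / lamBar := by positivity
    have hW : C * s ^ p = 2 * (Real.sqrt k / lamBar * (s / lamBar) ^ p) * A * B := by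
      rw [hCdef, Real.rpow_add hlamBar, Real.rpow_one, Real.div_rpow hs0.le hlamBar.le]
      have : 0 < lamBar ^ p := by positivity
      field_simp
    have hXY : (Real.sqrt k / lamBar * (s / lamBar) ^ p) ^ 2 =
        (μ s * (k / s) * (s / lamBar) ^ k) * ((1 / μ s) * (s / lamBar) ^ n * (1 / lamBar)) := by
      have h1 : ((s / lamBar) ^ p) ^ 2 * (s / lamBar) = (s / lamBar) ^ k * (s / lamBar) ^ n := by
        rw [← Real.rpow_natCast, ← Real.rpow_mul ht.le, ← Real.rpow_add ht]
        nth_rewrite 2 [← Real.rpow_one (s / lamBar)]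
        rw [← Real.rpow_add ht]
        congr 1
        push_cast
        rw [hpdef]; ring
      rw [mul_pow, div_pow, Real.sq_sqrt hk.le]
      have h2 : (μ s * (k / s) * (s / lamBar) ^ k) * ((1 / μ s) * (s / lamBar) ^ n * (1 / lamBar))
          = k / (s * lamBar) * ((s / lamBar) ^ k * (s / lamBar) ^ n) := by
        field_simp
      rw [h2, ← h1]
      field_simp
    rw [hW]
    have hX : 0 < μ s * (k / s) * (s / lamBar) ^ k := by positivity
    have hY : 0 < (1 / μ s) * (s / lamBar) ^ n * (1 / lamBar) := by positivity
    generalize μ s * (k / s) * (s / lamBar) ^ k = X at *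
    generalize (1 / μ s) * (s / lamBar) ^ n * (1 / lamBar) = Y at *
    generalize Real.sqrt k / lamBar * (s / lamBar) ^ p = W at *
    refine abs_le_of_sq_le_sq' ?_ (by positivity) |>.2
    have : (2 * W * A * B) ^ 2 = 4 * (X * Y) * A ^ 2 * B ^ 2 := by rw [← hXY]; ring
    rw [this]
    nlinarith [sq_nonneg (X * A ^ 2 - Y * B ^ 2)]
  have hint : IntegrableOn (fun s : ℝ => C * s ^ p) (Set.Ioo 0 lamBar) := by
    have := (intervalIntegral.intervalIntegrable_rpow' (a := 0) (b := lamBar) hp).const_mul C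
    rw [intervalIntegrable_iff_integrableOn_Ioo_of_le hlamBar.le] at this
    exact this
  have hval : ∫ s in Set.Ioo 0 lamBar, C * s ^ p = C * (lamBar ^ (p + 1) / (p + 1)) := by
    rw [← integral_Ioc_eq_integral_Ioo, ← intervalIntegral.integral_of_le hlamBar.le,
      intervalIntegral.integral_const_mul, integral_rpow (Or.inl hp), Real.zero_rpow hp1.ne',
      sub_zero]
  have hlow : ENNReal.ofReal (C * (lamBar ^ (p + 1) / (p + 1))) ≤
      ∫⁻ s in Set.Ioo (0 : ℝ) lamBar,
          ENNReal.ofReal (μ s * (k / s) * (s / lamBar) ^ k * A ^ 2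
            + (1 / μ s) * (s / lamBar) ^ n * (1 / lamBar) * B ^ 2) := by
    rw [← hval, ofReal_integral_eq_lintegral_ofReal hint]
    · exact setLIntegral_mono' measurableSet_Ioo
        (fun s hs => ENNReal.ofReal_le_ofReal (hpt s hs))
    · filter_upwards [ae_restrict_mem measurableSet_Ioo] with s hs
      exact mul_nonneg hC (Real.rpow_nonneg hs.1.le _)
  refine le_trans (le_of_eq ?_) (mul_le_mul_right hlow _)
  have h2 : (1 / 2 : ℝ≥0∞) = ENNReal.ofReal (1 / 2) := by
    rw [ENNReal.ofReal_div_of_pos (by norm_num)]; simp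
  rw [h2, ← ENNReal.ofReal_mul (by norm_num)]
  congr 1
  have h3 : k + n + 1 = 2 * (p + 1) := by rw [hpdef]; ring
  have h4 : 0 < lamBar ^ (p + 1) := by positivity
  rw [h3, hCdef]
  field_simp
end

section
/- Let λ̄ > 0, k > 0, n ≥ 0 be real numbers and A, B > 0, and define μ(s) = (B/(A·√k))·(λ̄/s)^{(k−n−1)/2} for s ∈ (0, λ̄). Then (1/2) ∫_0^{λ̄} [ μ(s)·(k/s)·(s/λ̄)^k·A² + (1/μ(s))·(s/λ̄)^n·(1/λ̄)·B² ] ds = (2·√k/(k + n + 1))·A·B. Moreover, if k ≥ n + 1 then μ is a positive, monotonically nonincreasing function on (0, λ̄]. -/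
open intervalIntegral

/-- The optimal weight function in the proof of Proposition 5:
with `μ(s) = (B/(A√k))(λ̄/s)^((k−n−1)/2)` on `(0, λ̄)`, the bound is attained:
`(1/2) ∫_0^λ̄ [ μ(s)(k/s)(s/λ̄)^k A² + (1/μ(s))(s/λ̄)^n (1/λ̄) B² ] ds
  = (2√k/(k+n+1)) A B`; moreover if `k ≥ n + 1` then `μ` is positive and
nonincreasing on `(0, λ̄]`. -/
theorem optimal_weight_function
    (lamBar k n : ℝ) (hlamBar : 0 < lamBar) (hk : 0 < k) (hn : 0 ≤ n)
    (A B : ℝ) (hA : 0 < A) (hB : 0 < B)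
    (μ : ℝ → ℝ)
    (hμ : ∀ s ∈ Set.Ioc (0 : ℝ) lamBar,
      μ s = (B / (A * Real.sqrt k)) * (lamBar / s) ^ ((k - n - 1) / 2)) :
    ((1 / 2 : ℝ) * ∫ s in (0 : ℝ)..lamBar,
        (μ s * (k / s) * (s / lamBar) ^ k * A ^ 2
          + (1 / μ s) * (s / lamBar) ^ n * (1 / lamBar) * B ^ 2)
      = (2 * Real.sqrt k / (k + n + 1)) * A * B)
    ∧ (k ≥ n + 1 →
        (∀ s ∈ Set.Ioc (0 : ℝ) lamBar, 0 < μ s)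
        ∧ AntitoneOn μ (Set.Ioc (0 : ℝ) lamBar)) := by
  have hsk : 0 < Real.sqrt k := Real.sqrt_pos.mpr hk
  have hsq : Real.sqrt k * Real.sqrt k = k := Real.mul_self_sqrt hk.le
  have hc : 0 < B / (A * Real.sqrt k) := by positivity
  refine ⟨?_, ?_⟩
  · have key : (∫ s in (0 : ℝ)..lamBar,
        (μ s * (k / s) * (s / lamBar) ^ k * A ^ 2
          + (1 / μ s) * (s / lamBar) ^ n * (1 / lamBar) * B ^ 2))
        = ∫ s in (0 : ℝ)..lamBar,
          (2 * A * B * Real.sqrt k / lamBar) * (s / lamBar) ^ ((k + n - 1) / 2) := by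
      rw [intervalIntegral.integral_of_le hlamBar.le, intervalIntegral.integral_of_le hlamBar.le]
      apply MeasureTheory.setIntegral_congr_fun measurableSet_Ioc
      intro s hs
      have hs0 : 0 < s := hs.1
      have ht : 0 < s / lamBar := div_pos hs0 hlamBar
      have hinv : (lamBar / s) ^ ((k - n - 1) / 2)
          = ((s / lamBar) ^ ((k - n - 1) / 2))⁻¹ := by
        rw [← Real.inv_rpow ht.le, inv_div]
      have h1 : (s / lamBar) ^ k
          = (s / lamBar) ^ ((k + n - 1) / 2) * (s / lamBar) ^ ((k - n - 1) / 2)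
            * (s / lamBar) := by
        rw [← Real.rpow_add ht, ← Real.rpow_add_one ht.ne']
        congr 1; ring
      have h2 : (s / lamBar) ^ ((k + n - 1) / 2)
          = (s / lamBar) ^ ((k - n - 1) / 2) * (s / lamBar) ^ n := by
        rw [← Real.rpow_add ht]
        congr 1; ring
      have hP : 0 < (s / lamBar) ^ ((k - n - 1) / 2) := Real.rpow_pos_of_pos ht _
      simp only []
      rw [hμ s hs, hinv, h1, h2]
      generalize (s / lamBar) ^ ((k - n - 1) / 2) = P at *
      generalize (s / lamBar) ^ n = N at *
      generalize Real.sqrt k = r at *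
      subst hsq
      field_simp
      ring
    have hq : (-1 : ℝ) < (k + n - 1) / 2 := by linarith
    rw [key, intervalIntegral.integral_const_mul,
      intervalIntegral.integral_comp_div (fun t : ℝ => t ^ ((k + n - 1) / 2)) hlamBar.ne',
      zero_div, div_self hlamBar.ne', integral_rpow (Or.inl hq), Real.one_rpow,
      Real.zero_rpow (by linarith), smul_eq_mul]
    have e : (k + n - 1) / 2 + 1 = (k + n + 1) / 2 := by ring
    have hpos : 0 < k + n + 1 := by linarith
    rw [e]
    field_simp
    try ring
  · intro hkn
    refine ⟨fun s hs => ?_, fun s hs t ht hst => ?_⟩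
    · rw [hμ s hs]
      exact mul_pos hc (Real.rpow_pos_of_pos (div_pos hlamBar hs.1) _)
    · rw [hμ s hs, hμ t ht]
      apply mul_le_mul_of_nonneg_left _ hc.le
      apply Real.rpow_le_rpow (div_pos hlamBar ht.1).le
      · exact div_le_div_of_nonneg_left hlamBar.le hs.1 hst
      · linarith
end
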